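/- Let γ ∈ (0,1), λ ≥ 0, μ₁ > 0 be real numbers, and let b ≥ 0 satisfy b·γ < 1. Let l* ≥ 1 be a natural number and h : ℕ → ℝ a sequence such that h_{l*} < 0 ≤ h_{l*+1} and, for every l with 1 ≤ l ≤ l*, the inequality −(1 − b·γ)·h_l + γ·λ·(h_{l+1} − h_l) ≤ γ·μ₁·(h_l − h_{l−1}) holds. Then h_l < h_{l+1} for every l with 0 ≤ l < l*, and h_l < 0 for every l ≤ l*; that is, h_0 < h_1 < ⋯ < h_{l*} < 0. -/

import Mathlib

/-! The argument runs downward from `l*`: if `h (l + 1) < 0` and `h (l + 1) ≤ h (l + 2)`, the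
left-hand side of the inequality at `l + 1` is positive, which forces `h l < h (l + 1) < 0` and so
reproduces both conditions one index lower. -/

lemma lt_of_neg_mul_add_mul_sub_le_mul_sub {R : Type*} [Ring R] [LinearOrder R]
    [IsStrictOrderedRing R] {p q r x y z : R} (hp : 0 < p) (hq : 0 ≤ q) (hr : 0 ≤ r)
    (hy : y < 0) (hyz : y ≤ z) (hle : -p * y + q * (z - y) ≤ r * (y - x)) : x < y := by
  have hpos : 0 < r * (y - x) := calc
    0 < -p * y := mul_pos_of_neg_of_neg (neg_neg_of_pos hp) hy
    _ ≤ -p * y + q * (z - y) := le_add_of_nonneg_right (mul_nonneg hq (sub_nonneg.2 hyz))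
    _ ≤ r * (y - x) := hle
  exact sub_pos.1 (pos_of_mul_pos_right hpos hr)

lemma forall_lt_succ_and_forall_lt_of_backward_step {α : Type*} [Preorder α] {h : ℕ → α} {c : α}
    {n : ℕ} (hn : h n < c) (hle : h n ≤ h (n + 1))
    (hstep : ∀ l < n, h (l + 1) < c → h (l + 1) ≤ h (l + 2) → h l < h (l + 1)) :
    (∀ l < n, h l < h (l + 1)) ∧ ∀ l ≤ n, h l < c := by
  have invariant : ∀ l ≤ n, h l < c ∧ h l ≤ h (l + 1) := by
    intro l hl
    induction hl using Nat.decreasingInduction with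
    | self => exact ⟨hn, hle⟩
    | of_succ k hk ih =>
      have hlt : h k < h (k + 1) := hstep k hk ih.1 ih.2
      exact ⟨hlt.trans ih.1, hlt.le⟩
  refine ⟨fun l hl ↦ ?_, fun l hl ↦ (invariant l hl).1⟩
  obtain ⟨hlt, hmono⟩ := invariant (l + 1) hl
  exact hstep l hl hlt hmono

theorem stmt_0_general {R : Type*} [Ring R] [LinearOrder R] [IsStrictOrderedRing R]
    {p q r h : ℕ → R} {n : ℕ} (hp : ∀ l < n, 0 < p l) (hq : ∀ l < n, 0 ≤ q l)
    (hr : ∀ l < n, 0 ≤ r l) (hneg : h n < 0) (hle : h n ≤ h (n + 1))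
    (hrec : ∀ l < n, -p l * h (l + 1) + q l * (h (l + 2) - h (l + 1)) ≤
      r l * (h (l + 1) - h l)) :
    (∀ l < n, h l < h (l + 1)) ∧ ∀ l ≤ n, h l < 0 :=
  forall_lt_succ_and_forall_lt_of_backward_step hneg hle fun l hl hlt hmono ↦
    lt_of_neg_mul_add_mul_sub_le_mul_sub (hp l hl) (hq l hl) (hr l hl) hlt hmono (hrec l hl)

/-- For real γ ∈ (0,1), λ ≥ 0, μ₁ > 0, b ≥ 0 with b·γ < 1, a natural
number l* ≥ 1, and a real sequence h with h_{l*} < 0 ≤ h_{l*+1} satisfying the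
recursive inequality −(1 − bγ)·h_l + γλ·(h_{l+1} − h_l) ≤ γμ₁·(h_l − h_{l−1}) for
all 1 ≤ l ≤ l*, we have h_0 < h_1 < ⋯ < h_{l*} < 0. -/
theorem stmt_0 (γ lam μ₁ b : ℝ) (hγ0 : 0 < γ) (hγ1 : γ < 1)
    (hlam : 0 ≤ lam) (hμ₁ : 0 < μ₁) (hb : 0 ≤ b) (hbγ : b * γ < 1)
    (lstar : ℕ) (hlstar : 1 ≤ lstar) (h : ℕ → ℝ)
    (hneg : h lstar < 0) (hpos : 0 ≤ h (lstar + 1))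
    (hrec : ∀ l : ℕ, 1 ≤ l → l ≤ lstar →
      -(1 - b * γ) * h l + γ * lam * (h (l + 1) - h l) ≤ γ * μ₁ * (h l - h (l - 1))) :
    (∀ l : ℕ, l < lstar → h l < h (l + 1)) ∧ (∀ l : ℕ, l ≤ lstar → h l < 0) := by
  exact stmt_0_general (fun _ _ ↦ sub_pos.2 hbγ) (fun _ _ ↦ mul_nonneg hγ0.le hlam)
    (fun _ _ ↦ (mul_pos hγ0 hμ₁).le) hneg (hneg.le.trans hpos)
    fun l hl ↦ hrec (l + 1) l.succ_pos hl
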